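/- Let K be a UFD of characteristic p > 0, let A = K[x_1,…,x_n] be the polynomial algebra, B = K[x_1^p,…,x_n^p], and let f_1,…,f_m ∈ A with 1 ≤ m ≤ n. If every common divisor of all m×m jacobian minors jac^{f_1,…,f_m}_{j_1,…,j_m}, j_1,…,j_m ∈ {1,…,n}, is invertible (i.e., dgcd(f_1,…,f_m) is a unit), then f_1,…,f_m form a p-basis over B of the ring of constants of some K-derivation of A. -/

import Mathlib

open MvPolynomial

/-- The monomial `f₁^{α₁} ⋯ f_m^{α_m}` for a multi-index `α ∈ Ω_m` (all exponents `< p`). -/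
def pMonomial {S : Type*} [CommRing S] {m p : ℕ} (f : Fin m → S) (α : Fin m → Fin p) : S :=
  ∏ i, f i ^ (α i : ℕ)

/-- `f₁, …, f_m` are `p`-independent over the subring `B`. -/
def pIndependent {S : Type*} [CommRing S] (B : Subring S) {m : ℕ} (p : ℕ) (f : Fin m → S) : Prop :=
  ∀ b : (Fin m → Fin p) → S, (∀ α, b α ∈ B) →
    ∑ α : Fin m → Fin p, b α * pMonomial f α = 0 → ∀ α, b α = 0

/-- `f₁, …, f_m` form a `p`-basis of `R` over `B`. -/
def IsPBasis {S : Type*} [CommRing S] (B : Subring S) (R : Set S) {m : ℕ} (p : ℕ)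
    (f : Fin m → S) : Prop :=
  (↑B ⊆ R) ∧ (∀ α : Fin m → Fin p, pMonomial f α ∈ R) ∧ pIndependent B p f ∧
    ∀ r ∈ R, ∃ b : (Fin m → Fin p) → S, (∀ α, b α ∈ B) ∧
      r = ∑ α : Fin m → Fin p, b α * pMonomial f α

/-- The jacobian determinant of `f₁,…,f_m` w.r.t. the variables `x_{j₁},…,x_{j_m}`. -/
noncomputable def jacMinor {K : Type*} [CommRing K] {n m : ℕ} (f : Fin m → MvPolynomial (Fin n) K)
    (j : Fin m → Fin n) : MvPolynomial (Fin n) K :=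
  (Matrix.of fun i l => pderiv (j l) (f i)).det

/-- The subring `B = K[x₁^p, …, x_n^p]` of `K[x₁,…,x_n]`. -/
noncomputable def pPowers (K : Type*) [CommRing K] (n p : ℕ) : Subring (MvPolynomial (Fin n) K) :=
  (Algebra.adjoin K (Set.range fun i : Fin n => (X i : MvPolynomial (Fin n) K) ^ p)).toSubring

/-- `R_i = B[f₁,…,f̂ᵢ,…,f_m]`. -/
noncomputable def Ri (K : Type*) [CommRing K] {n m : ℕ} (p : ℕ) (f : Fin m → MvPolynomial (Fin n) K)
    (i : Fin m) : Subring (MvPolynomial (Fin n) K) :=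
  Subring.closure (↑(pPowers K n p) ∪ (f '' {j | j ≠ i}))

/-- `R_{ij} = B[f₁,…,f̂ᵢ,…,f̂ⱼ,…,f_m]`. -/
noncomputable def Rij (K : Type*) [CommRing K] {n m : ℕ} (p : ℕ) (f : Fin m → MvPolynomial (Fin n) K)
    (i j : Fin m) : Subring (MvPolynomial (Fin n) K) :=
  Subring.closure (↑(pPowers K n p) ∪ (f '' {l | l ≠ i ∧ l ≠ j}))

/-- An element is `B`-free if it has no noninvertible factor from `B`. -/
def BFree {S : Type*} [CommRing S] (B : Subring S) (a : S) : Prop :=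
  ∀ b ∈ B, b ∣ a → IsUnit b

/-- `C_B(f₁,…,f_m) = B₀(f₁,…,f_m) ∩ A`: those elements of `A` lying in the field of
fractions of `B[f₁,…,f_m]`. -/
def CB {S : Type*} [CommRing S] (B : Subring S) {m : ℕ} (f : Fin m → S) : Set S :=
  {a | ∃ s t : S, s ∈ Subring.closure (↑B ∪ Set.range f) ∧
      t ∈ Subring.closure (↑B ∪ Set.range f) ∧ s ≠ 0 ∧ a * s = t}

/-- A `B`-derivation of `A`: additive, Leibniz rule, vanishing on `B`. -/
def IsBDerivation {S : Type*} [CommRing S] (B : Subring S) (d : S → S) : Prop :=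
  (∀ x y, d (x + y) = d x + d y) ∧ (∀ x y, d (x * y) = x * d y + y * d x) ∧ ∀ b ∈ B, d b = 0

/-!
Write `B = K[x₁^p, …, xₙ^p]` and let `D` be the jacobian minor of `f` at `j₁, …, jₘ`. Cramer's rule
combines the partial derivatives along `x_{j₁}, …, x_{jₘ}` into derivations `E₁, …, Eₘ` with
`Eᵢ(fᵢ) = D` and `Eᵢ(f_k) = 0` for `i ≠ k`. If `q ∈ B` is relatively prime to `D`, applying the `Eᵢ`
repeatedly to a combination `∑ b_α f^α` divisible by `q` shows that `q` divides every `b_α`; the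
same argument with `q = 0` gives linear independence. Since `A^p ⊆ B`, a prime `q` of `B` has only
one prime factor in `A` up to associates, so some minor is relatively prime to it. Hence the
`B`-span of the monomials `f^α` is saturated: it contains `a` as soon as it contains a nonzero
`B`-multiple of `a`.

If `D ≠ 0`, completing `f` by the variables `x_k`, `k ∉ {j₁, …, jₘ}`, extends the `Eᵢ` to a dual
family, and the reduced monomials in the completed family span `A` up to nonzero factors from `B`.
The derivation `∑ x_k^p · x_k E_k` over the added variables acts on these monomials diagonally, with
eigenvalue `D ∑ β_k x_k^p`, which vanishes only if `β = 0`. So up to such factors the constants are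
combinations of the `f^α`, and saturation removes the factors.
-/

theorem derivation_sum_apply {R A M ι : Type*} [CommSemiring R] [CommSemiring A] [AddCommMonoid M]
    [Algebra R A] [Module A M] [Module R M] (s : Finset ι) (d : ι → Derivation R A M) (a : A) :
    (∑ i ∈ s, d i) a = ∑ i ∈ s, d i a := by
  rw [← Derivation.coeFnAddMonoidHom_apply, map_sum, Finset.sum_apply]
  rfl

theorem derivation_prod_pow_of_apply_eq_mul {R A ι : Type*} [CommRing R] [CommRing A] [Algebra R A]
    {d : Derivation R A A} {F c : ι → A} (hd : ∀ i, d (F i) = c i * F i) (e : ι → ℕ)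
    (s : Finset ι) :
    d (∏ i ∈ s, F i ^ e i) = (∑ i ∈ s, (e i : A) * c i) * ∏ i ∈ s, F i ^ e i := by
  classical
  have hpow (i : ι) : d (F i ^ e i) = e i * c i * F i ^ e i := by
    rw [Derivation.leibniz_pow, hd]
    cases e i with
    | zero => simp
    | succ k =>
      rw [Nat.add_sub_cancel, nsmul_eq_mul, smul_eq_mul]
      ring
  induction s using Finset.induction_on with
  | empty => simp
  | insert i s hi ih =>
    rw [Finset.prod_insert hi, Finset.sum_insert hi, Derivation.leibniz, ih, hpow, smul_eq_mul,
      smul_eq_mul]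
    ring

section DualFamily

variable {R A ι κ : Type*} [CommRing R] [CommRing A] [Algebra R A]

/-- The derivations `E i` are dual to the elements `F i` up to the common factor `D`, that is,
`E i (F k) = D δ_{ik}`. The factor replaces a division by the jacobian determinant `D`, which is
possible only in the field of fractions of `A`. -/
structure IsDualFamily (E : ι → Derivation R A A) (F : ι → A) (D : A) : Prop where
  apply_self : ∀ i, E i (F i) = D
  apply_of_ne : ∀ {i k}, i ≠ k → E i (F k) = 0

/-- The jacobian matrix of the elements `F i` with respect to the derivations `δ l`. -/
def jacobianMatrix (δ : κ → Derivation R A A) (F : ι → A) : Matrix ι κ A :=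
  Matrix.of fun i l => δ l (F i)

/-- The derivation sending `a` to the determinant of the jacobian matrix of `F` with `F i` replaced
by `a`, expanded along the `i`-th row. -/
noncomputable def cofactorDerivation [Fintype ι] [DecidableEq ι] (δ : ι → Derivation R A A)
    (F : ι → A) (i : ι) : Derivation R A A :=
  ∑ l, (jacobianMatrix δ F).adjugate l i • δ l

theorem cofactorDerivation_apply [Fintype ι] [DecidableEq ι] (δ : ι → Derivation R A A)
    (F : ι → A) (i : ι) (a : A) :
    cofactorDerivation δ F i a = ∑ l, (jacobianMatrix δ F).adjugate l i * δ l a := by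
  simp only [cofactorDerivation, derivation_sum_apply, Derivation.smul_apply, smul_eq_mul]

theorem isDualFamily_cofactorDerivation [Fintype ι] [DecidableEq ι] (δ : ι → Derivation R A A)
    (F : ι → A) : IsDualFamily (cofactorDerivation δ F) F (jacobianMatrix δ F).det := by
  have apply_eq (i k : ι) : cofactorDerivation δ F i (F k) =
      ((jacobianMatrix δ F).det • (1 : Matrix ι ι A)) k i := by
    rw [← Matrix.mul_adjugate, Matrix.mul_apply, cofactorDerivation_apply]
    exact Finset.sum_congr rfl fun l _ => mul_comm _ _
  exact ⟨fun i => by simp [apply_eq], fun hik => by simp [apply_eq, Matrix.one_apply_ne' hik]⟩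

theorem IsDualFamily.sumElim [Fintype ι] {E : ι → Derivation R A A} {f : ι → A} {D : A}
    (hE : IsDualFamily E f D) {δ : κ → Derivation R A A} {g : κ → A} (hδ : IsDualFamily δ g 1)
    (hEg : ∀ i k, E i (g k) = 0) :
    IsDualFamily (Sum.elim E fun k => D • δ k - ∑ i, δ k (f i) • E i) (Sum.elim f g) D := by
  classical
  have apply_f (k : κ) (i : ι) : (D • δ k - ∑ l, δ k (f l) • E l) (f i) = 0 := by
    rw [Derivation.sub_apply, derivation_sum_apply, Finset.sum_eq_single_of_mem i (by simp)
      fun l _ hl => by simp [hE.apply_of_ne hl]]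
    simp [hE.apply_self, mul_comm]
  have apply_g (k l : κ) : (D • δ k - ∑ i, δ k (f i) • E i) (g l) = D * δ k (g l) := by
    simp [derivation_sum_apply, hEg]
  constructor
  · rintro (i | k)
    · exact hE.apply_self i
    · simp [apply_g, hδ.apply_self]
  · rintro (i | k) (i' | k') hne
    · exact hE.apply_of_ne (by simpa using hne)
    · exact hEg i k'
    · exact apply_f k i'
    · simp [apply_g, hδ.apply_of_ne (by simpa using hne : k ≠ k')]

namespace IsDualFamily

variable {E : ι → Derivation R A A} {F : ι → A} {D : A}

theorem comp (hE : IsDualFamily E F D) {e : κ → ι} (he : Function.Injective e) :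
    IsDualFamily (E ∘ e) (F ∘ e) D :=
  ⟨fun k => hE.apply_self (e k), fun hkl => hE.apply_of_ne (he.ne hkl)⟩

theorem apply_aeval (hE : IsDualFamily E F D) (i : ι) (P : MvPolynomial ι R) :
    E i (aeval F P) = D * aeval F (pderiv i P) := by
  classical
  induction P using MvPolynomial.induction_on with
  | C a => simp
  | add P Q hP hQ => simp only [map_add, hP, hQ, mul_add]
  | mul_X P k hP =>
    simp only [map_add, map_mul, aeval_X, Derivation.leibniz, hP, smul_eq_mul]
    rcases eq_or_ne i k with rfl | hik
    · simp only [hE.apply_self, pderiv_X_self, map_one]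
      ring
    · simp only [hE.apply_of_ne hik, pderiv_X_of_ne hik.symm, map_zero]
      ring

theorem dvd_aeval_pderiv (hE : IsDualFamily E F D) {q : R}
    (hD : ∀ c, algebraMap R A q ∣ D * c → algebraMap R A q ∣ c) {P : MvPolynomial ι R}
    (hP : algebraMap R A q ∣ aeval F P) (i : ι) : algebraMap R A q ∣ aeval F (pderiv i P) := by
  obtain ⟨c, hc⟩ := hP
  apply hD
  rw [← hE.apply_aeval, hc, Derivation.leibniz, Derivation.map_algebraMap, smul_zero, add_zero]
  exact dvd_mul_right _ _

end IsDualFamily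

theorem dvd_aeval_of_forall_dvd_coeff {P : MvPolynomial ι R} {a : A} (F : ι → A)
    (hP : ∀ α, a ∣ algebraMap R A (coeff α P)) : a ∣ aeval F P := by
  rw [aeval_def, eval₂_eq]
  exact Finset.dvd_sum fun α _ => (hP α).mul_right _

theorem add_single_mem_support_of_mem_support_pderiv {P : MvPolynomial ι R} {i : ι} {β : ι →₀ ℕ}
    (hβ : β ∈ (pderiv i P).support) : β + Finsupp.single i 1 ∈ P.support := by
  rw [mem_support_iff, coeff_pderiv] at hβ
  exact mem_support_iff.2 (left_ne_zero_of_mul hβ)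

/-- The monomial `∏ i, F i ^ α i` with all exponents `< p`; this is `pMonomial` over an arbitrary
finite index type. -/
def reducedMonomial [Fintype ι] {p : ℕ} (F : ι → A) (α : ι → Fin p) : A :=
  ∏ i, F i ^ (α i : ℕ)

variable {E : ι → Derivation R A A} {F : ι → A} {D : A} {p : ℕ} [Fact p.Prime] [CharP A p]

theorem dvd_coeff_of_dvd_coeff_pderiv {P : MvPolynomial ι R} {q : A} {i : ι} {α : ι →₀ ℕ}
    (hi : α i ≠ 0) (hp : α i < p)
    (hq : q ∣ algebraMap R A (coeff (α - Finsupp.single i 1) (pderiv i P))) :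
    q ∣ algebraMap R A (coeff α P) := by
  have hexp : (α - Finsupp.single i 1 : ι →₀ ℕ) i + 1 = α i := by
    simp only [Finsupp.coe_tsub, Pi.sub_apply, Finsupp.single_eq_same]
    omega
  rw [coeff_pderiv, Finsupp.sub_add_single_one_cancel hi, ← Nat.cast_succ, Nat.succ_eq_add_one,
    hexp, map_mul, map_natCast] at hq
  have hunit : IsUnit (α i : A) :=
    (CharP.isUnit_natCast_iff Fact.out).2 (Nat.not_dvd_of_pos_of_lt (Nat.pos_of_ne_zero hi) hp)
  exact hunit.dvd_mul_right.1 hq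

namespace IsDualFamily

theorem dvd_coeff_of_dvd_aeval_of_degree_lt (hE : IsDualFamily E F D) {q : R}
    (hD : ∀ c, algebraMap R A q ∣ D * c → algebraMap R A q ∣ c) (N : ℕ) (P : MvPolynomial ι R)
    (hdeg : ∀ α ∈ P.support, α.degree < N) (hexp : ∀ α ∈ P.support, ∀ i, α i < p)
    (hP : algebraMap R A q ∣ aeval F P) (α : ι →₀ ℕ) :
    algebraMap R A q ∣ algebraMap R A (coeff α P) := by
  classical
  induction N generalizing P α with
  | zero =>
    have hα : α ∉ P.support := fun hα => absurd (hdeg α hα) (Nat.not_lt_zero _)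
    simp [notMem_support_iff.1 hα]
  | succ N ih =>
    have dvd_of_ne_zero (β : ι →₀ ℕ) (hβ : β ≠ 0) :
        algebraMap R A q ∣ algebraMap R A (coeff β P) := by
      by_cases hβP : β ∈ P.support
      · obtain ⟨i, hi⟩ := DFunLike.ne_iff.1 hβ
        refine dvd_coeff_of_dvd_coeff_pderiv hi (hexp β hβP i) ?_
        refine ih (pderiv i P) (fun γ hγ => ?_) (fun γ hγ k => ?_) (hE.dvd_aeval_pderiv hD hP i) _
        · have := hdeg _ (add_single_mem_support_of_mem_support_pderiv hγ)
          simp only [map_add, Finsupp.degree_single] at this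
          omega
        · refine lt_of_le_of_lt ?_ (hexp _ (add_single_mem_support_of_mem_support_pderiv hγ) k)
          simp
      · simp [notMem_support_iff.1 hβP]
    rcases eq_or_ne α 0 with rfl | hα
    · have dvd_rest : algebraMap R A q ∣ aeval F (P - C (coeff 0 P)) := by
        refine dvd_aeval_of_forall_dvd_coeff F fun β => ?_
        rcases eq_or_ne β 0 with rfl | hβ
        · simp
        · simpa [coeff_C, hβ.symm] using dvd_of_ne_zero β hβ
      simpa using dvd_sub hP dvd_rest
    · exact dvd_of_ne_zero α hα

variable [Fintype ι]

theorem dvd_of_dvd_sum_smul_reducedMonomial [DecidableEq ι] (hE : IsDualFamily E F D) {q : R}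
    (hD : ∀ c, algebraMap R A q ∣ D * c → algebraMap R A q ∣ c) {b : (ι → Fin p) → R}
    (hb : algebraMap R A q ∣ ∑ α, b α • reducedMonomial F α) (α : ι → Fin p) :
    algebraMap R A q ∣ algebraMap R A (b α) := by
  let exponent (α : ι → Fin p) : ι →₀ ℕ := Finsupp.equivFunOnFinite.symm fun i => (α i : ℕ)
  have exponent_injective : Function.Injective exponent := fun α β h =>
    funext fun i => Fin.ext (DFunLike.congr_fun h i)
  let P : MvPolynomial ι R := ∑ α, monomial (exponent α) (b α)
  have coeff_P (α : ι → Fin p) : coeff (exponent α) P = b α := by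
    simp [P, coeff_sum, coeff_monomial, exponent_injective.eq_iff]
  have aeval_P : aeval F P = ∑ α, b α • reducedMonomial F α := by
    simp only [P, map_sum, aeval_monomial, Algebra.smul_def, reducedMonomial]
    refine Finset.sum_congr rfl fun α _ => ?_
    rw [Finsupp.prod_fintype _ _ fun _ => pow_zero _]
    rfl
  have exp_lt (β : ι →₀ ℕ) (hβ : β ∈ P.support) (i : ι) : β i < p := by
    obtain ⟨α, -, hα⟩ := Finset.mem_biUnion.1 (support_sum hβ)
    obtain rfl := Finset.mem_singleton.1 (support_monomial_subset hα)
    exact (α i).isLt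
  rw [← coeff_P α]
  exact hE.dvd_coeff_of_dvd_aeval_of_degree_lt hD (P.support.sup Finsupp.degree + 1) P
    (fun β hβ => Nat.lt_succ_of_le (Finset.le_sup (f := Finsupp.degree) hβ)) exp_lt
    (aeval_P ▸ hb) (exponent α)

theorem linearIndependent_reducedMonomial [IsDomain A] [FaithfulSMul R A]
    (hE : IsDualFamily E F D) (hD : D ≠ 0) :
    LinearIndependent R (reducedMonomial F : (ι → Fin p) → A) := by
  classical
  refine Fintype.linearIndependent_iff.2 fun b hb α => ?_
  have := hE.dvd_of_dvd_sum_smul_reducedMonomial (q := 0) (by simp [hD]) (b := b) (by simp [hb]) α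
  simpa using this

end IsDualFamily

end DualFamily

section SumElim

variable {R A ι κ : Type*} [CommRing A] [Fintype ι] [Fintype κ] {p : ℕ}

theorem reducedMonomial_sumElim (f : ι → A) (g : κ → A) (α : ι ⊕ κ → Fin p) :
    reducedMonomial (Sum.elim f g) α =
      reducedMonomial f (α ∘ Sum.inl) * reducedMonomial g (α ∘ Sum.inr) :=
  Fintype.prod_sum_type _

theorem reducedMonomial_mem_of_weight_eq_zero [AddCommMonoid R] {f : ι → A} {g : κ → A}
    {w : κ → R}
    (hw : ∀ β : κ → Fin p, ∑ k, (β k : ℕ) • w k = 0 → ∀ k, (β k : ℕ) = 0) {α : ι ⊕ κ → Fin p}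
    (hα : ∑ s, (α s : ℕ) • Sum.elim (0 : ι → R) w s = 0) :
    reducedMonomial (Sum.elim f g) α ∈ Set.range (reducedMonomial f : (ι → Fin p) → A) := by
  have hβ : ∀ k, ((α ∘ Sum.inr) k : ℕ) = 0 := hw _ (by simpa using hα)
  refine ⟨α ∘ Sum.inl, ?_⟩
  rw [reducedMonomial_sumElim, reducedMonomial.eq_def g]
  simp only [hβ, pow_zero, Finset.prod_const_one, mul_one]

end SumElim

section WeightedEuler

variable {R A ι κ : Type*} [CommRing R] [CommRing A] [Algebra R A] [Fintype ι]

/-- The Euler derivation `∑ i, w i F i E i`. If `E` is dual to `F` up to the factor `D`, every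
monomial in `F` is an eigenvector, with eigenvalue `D` times the weight of its exponent. -/
noncomputable def eulerDerivation (E : ι → Derivation R A A) (F : ι → A) (w : ι → R) :
    Derivation R A A :=
  ∑ i, (w i • F i) • E i

variable {E : ι → Derivation R A A} {F : ι → A} {D : A} {p : ℕ}

theorem IsDualFamily.eulerDerivation_apply_self (hE : IsDualFamily E F D) (w : ι → R) (i : ι) :
    eulerDerivation E F w (F i) = w i • D * F i := by
  rw [eulerDerivation, derivation_sum_apply, Finset.sum_eq_single_of_mem i (Finset.mem_univ i)
    fun l _ hl => by simp [hE.apply_of_ne hl]]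
  simp only [Derivation.smul_apply, hE.apply_self, smul_eq_mul, Algebra.smul_def]
  ring

theorem IsDualFamily.eulerDerivation_reducedMonomial (hE : IsDualFamily E F D) (w : ι → R)
    (α : ι → Fin p) :
    eulerDerivation E F w (reducedMonomial F α) =
      D * (∑ i, (α i : ℕ) • w i) • reducedMonomial F α := by
  rw [reducedMonomial, derivation_prod_pow_of_apply_eq_mul (hE.eulerDerivation_apply_self w)]
  simp only [nsmul_eq_mul]
  simp only [Algebra.smul_def, map_sum, map_mul, map_natCast, Finset.sum_mul, Finset.mul_sum]
  exact Finset.sum_congr rfl fun i _ => by ring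

theorem IsDualFamily.mem_span_weight_eq_zero [IsDomain R] [IsDomain A] (hE : IsDualFamily E F D)
    (hD : D ≠ 0) (hF : LinearIndependent R (reducedMonomial F : (ι → Fin p) → A)) (w : ι → R)
    {a : A} (ha : a ∈ Submodule.span R (Set.range (reducedMonomial F : (ι → Fin p) → A)))
    (hda : eulerDerivation E F w a = 0) :
    a ∈ Submodule.span R (reducedMonomial F '' {α : ι → Fin p | ∑ i, (α i : ℕ) • w i = 0}) := by
  classical
  obtain ⟨c, rfl⟩ := (Submodule.mem_span_range_iff_exists_fun R).1 ha
  have hsum : ∑ α, (c α * ∑ i, (α i : ℕ) • w i) • reducedMonomial F α = 0 := by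
    refine (mul_eq_zero.1 ?_).resolve_left hD
    rw [Finset.mul_sum, ← hda, map_sum]
    refine Finset.sum_congr rfl fun α _ => ?_
    rw [Derivation.map_smul, hE.eulerDerivation_reducedMonomial, mul_smul, mul_smul_comm (c α)]
  refine Submodule.sum_mem _ fun α _ => ?_
  rcases mul_eq_zero.1 (Fintype.linearIndependent_iff.1 hF _ hsum α) with hc | hw
  · simp [hc]
  · exact Submodule.smul_mem _ _ (Submodule.subset_span ⟨α, hw, rfl⟩)

theorem IsDualFamily.eulerDerivation_eq_zero_of_mem_span [Fintype κ] {f : ι → A} {g : κ → A}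
    {E : ι ⊕ κ → Derivation R A A}
    (hE : IsDualFamily E (Sum.elim f g) D) (w : κ → R) {a : A}
    (ha : a ∈ Submodule.span R (Set.range (reducedMonomial f : (ι → Fin p) → A))) :
    eulerDerivation E (Sum.elim f g) (Sum.elim 0 w) a = 0 := by
  set d := eulerDerivation E (Sum.elim f g) (Sum.elim 0 w)
  suffices h : Submodule.span R (Set.range (reducedMonomial f : (ι → Fin p) → A)) ≤
      LinearMap.ker (d : A →ₗ[R] A) from h ha
  refine Submodule.span_le.2 ?_
  rintro _ ⟨α, rfl⟩
  have hd (i : ι) : d (f i) = 0 * f i := by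
    simpa using hE.eulerDerivation_apply_self (Sum.elim 0 w) (Sum.inl i)
  exact (derivation_prod_pow_of_apply_eq_mul hd _ _).trans (by simp)

end WeightedEuler

section LinearAlgebra

variable {R M τ τ' : Type*} [CommRing R] [IsDomain R] [AddCommGroup M] [Module R M]
  [Fintype τ] [Fintype τ'] {v : τ → M} {w : τ' → M}

theorem exists_smul_mem_span_of_card_le (hv : LinearIndependent R v)
    (hw : Submodule.span R (Set.range w) = ⊤) (hcard : Fintype.card τ' ≤ Fintype.card τ) (x : M) :
    ∃ r : R, r ≠ 0 ∧ r • x ∈ Submodule.span R (Set.range v) := by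
  let N := Submodule.span R (Set.range v)
  have : Module.Finite R M :=
    .of_surjective _ (LinearMap.range_eq_top.1 ((Fintype.range_linearCombination R w).trans hw))
  have hrank : Module.finrank R (M ⧸ N) = 0 := by
    have := N.finrank_quotient_add_finrank
    have : Module.finrank R N = Fintype.card τ := finrank_span_eq_card hv
    have := finrank_le_of_span_eq_top hw
    omega
  obtain ⟨r, hr⟩ := Module.finrank_eq_zero_iff_isTorsion.1 hrank (x := N.mkQ x)
  exact ⟨r, nonZeroDivisors.coe_ne_zero r, (Submodule.Quotient.mk_eq_zero N).1 hr⟩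

theorem mem_span_of_smul_mem_span [UniqueFactorizationMonoid R] [Module.IsTorsionFree R M]
    (hv : ∀ q : R, Prime q → ∀ (b : τ → R) (x : M), ∑ t, b t • v t = q • x → ∀ t, q ∣ b t)
    {r : R} (hr : r ≠ 0) {x : M} (hx : r • x ∈ Submodule.span R (Set.range v)) :
    x ∈ Submodule.span R (Set.range v) := by
  induction r using UniqueFactorizationMonoid.induction_on_prime generalizing x with
  | h₁ => exact absurd rfl hr
  | h₂ u hu => exact (Submodule.smul_mem_iff_of_isUnit _ hu).1 hx
  | h₃ r q hr₀ hq ih =>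
    refine ih hr₀ ?_
    obtain ⟨b, hb⟩ := (Submodule.mem_span_range_iff_exists_fun R).1 hx
    rw [mul_smul] at hb
    choose c hc using hv q hq b _ hb
    refine (Submodule.mem_span_range_iff_exists_fun R).2
      ⟨c, smul_right_injective M hq.ne_zero ?_⟩
    simp only [← hb, hc, mul_smul, Finset.smul_sum]

end LinearAlgebra

section PowersInBase

variable {R A : Type*} [CommRing R] [CommRing A] [Algebra R A] [FaithfulSMul R A] {p : ℕ}

theorem dvd_of_algebraMap_dvd_algebraMap [IsDomain R] [IsIntegrallyClosed R] (hp : p ≠ 0)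
    (hpow : ∀ a : A, a ^ p ∈ (algebraMap R A).range) {q r : R}
    (h : algebraMap R A q ∣ algebraMap R A r) : q ∣ r := by
  obtain ⟨a, ha⟩ := h
  obtain ⟨s, hs⟩ := hpow a
  refine (IsIntegrallyClosed.pow_dvd_pow_iff hp).1 ⟨s, FaithfulSMul.algebraMap_injective R A ?_⟩
  rw [map_mul, map_pow, map_pow, hs, ha, mul_pow]

theorem algebraMap_dvd_pow_of_dvd_algebraMap [IsDomain R] (hp : p ≠ 0)
    (hpow : ∀ a : A, a ^ p ∈ (algebraMap R A).range) {q : R} (hq : Prime q) {g : A}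
    (hg : ¬IsUnit g) (hgq : g ∣ algebraMap R A q) : algebraMap R A q ∣ g ^ p := by
  obtain ⟨c, hc⟩ := hgq
  obtain ⟨r, hr⟩ := hpow g
  obtain ⟨s, hs⟩ := hpow c
  have hrq : r ∣ q ^ p := by
    refine ⟨s, FaithfulSMul.algebraMap_injective R A ?_⟩
    rw [map_pow, map_mul, hr, hs, hc, mul_pow]
  obtain ⟨k, -, hk⟩ := (dvd_prime_pow hq p).1 hrq
  have hk₀ : k ≠ 0 := by
    rintro rfl
    rw [pow_zero, associated_one_iff_isUnit] at hk
    exact hg ((isUnit_pow_iff hp).1 (hr ▸ hk.map (algebraMap R A)))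
  rw [← hr]
  exact map_dvd _ ((dvd_pow_self q hk₀).trans hk.symm.dvd)

theorem exists_isRelPrime_algebraMap [IsDomain R] [IsIntegrallyClosed R]
    [UniqueFactorizationMonoid A] (hp : p ≠ 0) (hpow : ∀ a : A, a ^ p ∈ (algebraMap R A).range)
    {J : Type*} {c : J → A} (hc : ∀ g, (∀ j, g ∣ c j) → IsUnit g) {q : R} (hq : Prime q) :
    ∃ j, IsRelPrime (algebraMap R A q) (c j) := by
  have hqu : ¬IsUnit (algebraMap R A q) := fun hu =>
    hq.not_isUnit (isUnit_of_dvd_one (dvd_of_algebraMap_dvd_algebraMap hp hpow hu.dvd))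
  -- `g` divides a power of every nonunit divisor of `q`, so one minor prime to `g` suffices.
  obtain ⟨g, hg, hgq⟩ := WfDvdMonoid.exists_irreducible_factor hqu
    ((map_ne_zero_iff _ (FaithfulSMul.algebraMap_injective R A)).2 hq.ne_zero)
  obtain ⟨j, hj⟩ : ∃ j, ¬g ∣ c j := by
    by_contra! hdvd
    exact hg.not_isUnit (hc g hdvd)
  refine ⟨j, fun e heq hec => ?_⟩
  by_contra heu
  have hge : g ∣ e ^ p := hgq.trans (algebraMap_dvd_pow_of_dvd_algebraMap hp hpow hq heu heq)
  exact hj ((hg.prime.dvd_of_dvd_pow hge).trans hec)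

end PowersInBase

section Constants

variable {R A ι : Type*} [CommRing R] [IsDomain R] [UniqueFactorizationMonoid R]
  [CommRing A] [IsDomain A] [Algebra R A] [FaithfulSMul R A] [Fintype ι] {p : ℕ} [Fact p.Prime]
  [CharP A p]

theorem mem_span_reducedMonomial_of_smul_mem_span [UniqueFactorizationMonoid A]
    (hpow : ∀ a : A, a ^ p ∈ (algebraMap R A).range) {f : ι → A} {J : Type*} {D : J → A}
    {E : J → ι → Derivation R A A} (hE : ∀ j, IsDualFamily (E j) f (D j))
    (hD : ∀ g, (∀ j, g ∣ D j) → IsUnit g) {r : R} (hr : r ≠ 0) {a : A}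
    (ha : r • a ∈ Submodule.span R (Set.range (reducedMonomial f : (ι → Fin p) → A))) :
    a ∈ Submodule.span R (Set.range (reducedMonomial f : (ι → Fin p) → A)) := by
  classical
  have hp : p ≠ 0 := (Fact.out : p.Prime).ne_zero
  refine mem_span_of_smul_mem_span (fun q hq b x hb α => ?_) hr ha
  obtain ⟨j, hj⟩ := exists_isRelPrime_algebraMap hp hpow hD hq
  refine dvd_of_algebraMap_dvd_algebraMap hp hpow ?_
  refine (hE j).dvd_of_dvd_sum_smul_reducedMonomial (fun c => hj.dvd_of_dvd_mul_left) ?_ α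
  exact ⟨x, hb.trans (Algebra.smul_def q x)⟩

end Constants

section EulerKernel

variable {R A ι κ : Type*} [CommRing R] [IsDomain R] [CommRing A] [IsDomain A] [Algebra R A]
  [FaithfulSMul R A] [Fintype ι] [Fintype κ] {p : ℕ} [Fact p.Prime] [CharP A p] {f : ι → A}
  {g : κ → A} {E : ι ⊕ κ → Derivation R A A} {D : A}

theorem IsDualFamily.eulerDerivation_eq_zero_iff (hE : IsDualFamily E (Sum.elim f g) D)
    (hD : D ≠ 0) {w : κ → R}
    (hw : ∀ β : κ → Fin p, ∑ k, (β k : ℕ) • w k = 0 → ∀ k, (β k : ℕ) = 0) {τ : Type*} [Fintype τ]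
    {v : τ → A} (hv : Submodule.span R (Set.range v) = ⊤)
    (hcard : Fintype.card τ ≤ p ^ (Fintype.card ι + Fintype.card κ))
    (hsat : ∀ (r : R) (a : A), r ≠ 0 →
      r • a ∈ Submodule.span R (Set.range (reducedMonomial f : (ι → Fin p) → A)) →
      a ∈ Submodule.span R (Set.range (reducedMonomial f : (ι → Fin p) → A))) (a : A) :
    eulerDerivation E (Sum.elim f g) (Sum.elim 0 w) a = 0 ↔
      a ∈ Submodule.span R (Set.range (reducedMonomial f : (ι → Fin p) → A)) := by
  classical
  refine ⟨fun ha => ?_, hE.eulerDerivation_eq_zero_of_mem_span w⟩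
  have hli : LinearIndependent R (reducedMonomial (Sum.elim f g) : (ι ⊕ κ → Fin p) → A) :=
    hE.linearIndependent_reducedMonomial hD
  obtain ⟨r, hr, hra⟩ := exists_smul_mem_span_of_card_le hli hv (by simpa using hcard) a
  refine hsat r a hr (Submodule.span_mono ?_
    (hE.mem_span_weight_eq_zero hD hli (Sum.elim 0 w) hra ?_))
  · rintro _ ⟨α, hα, rfl⟩
    exact reducedMonomial_mem_of_weight_eq_zero hw hα
  · rw [Derivation.map_smul, ha, smul_zero]

end EulerKernel

section Jacobian

variable {R A σ ι κ : Type*} [CommRing R] [CommRing A] [Algebra R A]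

theorem IsDualFamily.eq_zero_of_sum_nsmul_pow_eq_zero [IsReduced A] [Fintype κ] {p : ℕ}
    [Fact p.Prime] [CharP A p] {δ : κ → Derivation R A A} {x : κ → A} (hδ : IsDualFamily δ x 1)
    {β : κ → Fin p} (hβ : ∑ k, (β k : ℕ) • x k ^ p = 0) (k : κ) : (β k : ℕ) = 0 := by
  have hsum : ∑ l, (β l : ℕ) • x l = 0 := by
    refine frobenius_inj A p ?_
    rw [map_sum, map_zero, ← hβ]
    refine Finset.sum_congr rfl fun l _ => ?_
    rw [nsmul_eq_mul, map_mul, map_natCast, frobenius_def, nsmul_eq_mul]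
  have hk : ((β k : ℕ) : A) = 0 := by
    rw [← map_zero (δ k), ← hsum, map_sum, Finset.sum_eq_single_of_mem k (Finset.mem_univ k)
      fun l _ hl => by rw [Derivation.map_smul_of_tower, hδ.apply_of_ne hl.symm, smul_zero]]
    rw [Derivation.map_smul_of_tower, hδ.apply_self, nsmul_one]
  exact Nat.eq_zero_of_dvd_of_lt ((CharP.cast_eq_zero_iff A p _).1 hk) (β k).isLt

variable [Fintype ι] [DecidableEq ι] {δ : σ → Derivation R A A} {x : σ → A} {f : ι → A}

theorem injective_of_det_jacobianMatrix_comp_ne_zero {j : ι → σ}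
    (hj : (jacobianMatrix (δ ∘ j) f).det ≠ 0) : Function.Injective j := by
  intro k l hkl
  by_contra hne
  exact hj (Matrix.det_zero_of_column_eq hne fun i => by simp [jacobianMatrix, hkl])

theorem IsDualFamily.exists_sumElim_compl_range (hδ : IsDualFamily δ x 1) (f : ι → A)
    (j : ι → σ) :
    ∃ E : ι ⊕ ((Set.range j)ᶜ : Set σ) → Derivation R A A,
      IsDualFamily E (Sum.elim f (x ∘ (↑))) (jacobianMatrix (δ ∘ j) f).det := by
  refine ⟨_, (isDualFamily_cofactorDerivation (δ ∘ j) f).sumElim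
    (hδ.comp Subtype.val_injective) fun i k => ?_⟩
  rw [cofactorDerivation_apply]
  refine Finset.sum_eq_zero fun l _ => mul_eq_zero_of_right _ ?_
  exact hδ.apply_of_ne fun h => k.2 ⟨l, h⟩

theorem exists_derivation_eq_zero_iff_mem_span [IsDomain R] [UniqueFactorizationMonoid R]
    [IsDomain A] [UniqueFactorizationMonoid A] [FaithfulSMul R A] {p : ℕ} [Fact p.Prime] [CharP A p]
    [Fintype σ] (hpow : ∀ a : A, a ^ p ∈ (algebraMap R A).range) (hδ : IsDualFamily δ x 1)
    (hx : Submodule.span R (Set.range (reducedMonomial x : (σ → Fin p) → A)) = ⊤)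
    (hf : ∀ g, (∀ j : ι → σ, g ∣ (jacobianMatrix (δ ∘ j) f).det) → IsUnit g) {j : ι → σ}
    (hj : (jacobianMatrix (δ ∘ j) f).det ≠ 0) :
    ∃ d : Derivation R A A, ∀ a,
      d a = 0 ↔ a ∈ Submodule.span R (Set.range (reducedMonomial f : (ι → Fin p) → A)) := by
  classical
  obtain ⟨E, hE⟩ := hδ.exists_sumElim_compl_range f j
  have hcard : Fintype.card (σ → Fin p) ≤
      p ^ (Fintype.card ι + Fintype.card ((Set.range j)ᶜ : Set σ)) := by
    let e : ι ⊕ ((Set.range j)ᶜ : Set σ) ≃ σ :=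
      ((Equiv.ofInjective j (injective_of_det_jacobianMatrix_comp_ne_zero hj)).sumCongr
        (Equiv.refl _)).trans (Equiv.Set.sumCompl _)
    simp [← Fintype.card_congr e]
  choose w hw using fun k : ((Set.range j)ᶜ : Set σ) => hpow (x k)
  refine ⟨_, hE.eulerDerivation_eq_zero_iff hj (w := w) (fun β hβ => ?_) hx hcard
    fun r a hr ha => ?_⟩
  · refine (hδ.comp Subtype.val_injective).eq_zero_of_sum_nsmul_pow_eq_zero ?_
    simpa [hw] using congrArg (algebraMap R A) hβ
  · exact mem_span_reducedMonomial_of_smul_mem_span hpow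
      (fun j : ι → σ => isDualFamily_cofactorDerivation (δ ∘ j) f) hf hr ha

end Jacobian

theorem isPBasis_span_reducedMonomial {K A : Type*} [CommRing K] [CommRing A] [Algebra K A]
    {S : Subalgebra K A} {m p : ℕ} [NeZero p] {f : Fin m → A}
    (hf : LinearIndependent S (reducedMonomial f : (Fin m → Fin p) → A)) :
    IsPBasis S.toSubring
      (Submodule.span S (Set.range (reducedMonomial f : (Fin m → Fin p) → A)) : Set A) p f := by
  refine ⟨fun s hs => ?_, fun α => Submodule.subset_span ⟨α, rfl⟩, fun b hb hsum α => ?_,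
    fun a ha => ?_⟩
  · have h1 : reducedMonomial f (0 : Fin m → Fin p) = 1 := by simp [reducedMonomial]
    rw [← mul_one s, ← h1]
    exact Submodule.smul_mem _ (⟨s, hs⟩ : S) (Submodule.subset_span ⟨0, rfl⟩)
  · exact congrArg Subtype.val (Fintype.linearIndependent_iff.1 hf (fun α => ⟨b α, hb α⟩) hsum α)
  · obtain ⟨b, rfl⟩ := (Submodule.mem_span_range_iff_exists_fun S).1 ha
    exact ⟨fun α => b α, fun α => (b α).2, rfl⟩

theorem pBasis_of_dgcd_isUnit_general {K A σ : Type*} [CommRing K] [CommRing A] [IsDomain A]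
    [UniqueFactorizationMonoid A] [Algebra K A] {S : Subalgebra K A} [UniqueFactorizationMonoid S]
    {p : ℕ} [Fact p.Prime] [CharP A p] (hpow : ∀ a : A, a ^ p ∈ S) [Fintype σ]
    {δ : σ → Derivation S A A} {x : σ → A} (hδ : IsDualFamily δ x 1)
    (hx : Submodule.span S (Set.range (reducedMonomial x : (σ → Fin p) → A)) = ⊤) {m : ℕ}
    {f : Fin m → A}
    (hf : ∀ g, (∀ j : Fin m → σ, g ∣ (jacobianMatrix (δ ∘ j) f).det) → IsUnit g) :
    ∃ d : Derivation S A A, IsPBasis S.toSubring {a | d a = 0} p f := by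
  obtain ⟨j, hj⟩ : ∃ j : Fin m → σ, (jacobianMatrix (δ ∘ j) f).det ≠ 0 := by
    by_contra! hzero
    exact not_isUnit_zero (hf 0 fun j => (hzero j).symm.dvd)
  have hli := (isDualFamily_cofactorDerivation (δ ∘ j) f).linearIndependent_reducedMonomial
    (p := p) hj
  obtain ⟨d, hd⟩ := exists_derivation_eq_zero_iff_mem_span (p := p)
    (fun a => ⟨⟨_, hpow a⟩, rfl⟩) hδ hx hf hj
  have hconst : {a | d a = 0} = _ := Set.ext hd
  exact ⟨d, hconst ▸ isPBasis_span_reducedMonomial hli⟩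

/-- A `K`-derivation vanishing on a subalgebra `S`, regarded as an `S`-derivation. -/
def derivationOver {K A : Type*} [CommRing K] [CommRing A] [Algebra K A] (S : Subalgebra K A)
    (d : Derivation K A A) (hd : ∀ s ∈ S, d s = 0) : Derivation S A A :=
  Derivation.mk'
    { toFun := d
      map_add' := d.map_add
      map_smul' := fun s a => by simp [Algebra.smul_def, Derivation.leibniz, hd] }
    d.leibniz

section PPowers

variable (K σ : Type*) [CommRing K] (p : ℕ)

/-- The subalgebra `K[xᵢ^p]` of `K[xᵢ]` generated by the `p`-th powers of the variables. As a
subring it is `pPowers` when the variables are indexed by `Fin n`. -/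
noncomputable def pPowerSubalgebra : Subalgebra K (MvPolynomial σ K) :=
  Algebra.adjoin K (Set.range fun i => X i ^ p)

variable {K σ p}

theorem X_pow_mem_pPowerSubalgebra (i : σ) : X i ^ p ∈ pPowerSubalgebra K σ p :=
  Algebra.subset_adjoin ⟨i, rfl⟩

theorem expand_mem_pPowerSubalgebra (P : MvPolynomial σ K) :
    expand p P ∈ pPowerSubalgebra K σ p := by
  rw [pPowerSubalgebra, Algebra.adjoin_range_eq_range_aeval]
  exact ⟨P, rfl⟩

theorem pow_mem_pPowerSubalgebra [ExpChar K p] (P : MvPolynomial σ K) :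
    P ^ p ∈ pPowerSubalgebra K σ p := by
  rw [← map_frobenius_expand, map_expand]
  exact expand_mem_pPowerSubalgebra _

theorem uniqueFactorizationMonoid_pPowerSubalgebra [UniqueFactorizationMonoid K] (hp : 0 < p) :
    UniqueFactorizationMonoid (pPowerSubalgebra K σ p) :=
  have hX : AlgebraicIndependent K fun i : σ => (X i : MvPolynomial σ K) ^ p := expand_injective hp
  hX.aevalEquiv.toMulEquiv.uniqueFactorizationMonoid inferInstance

theorem derivation_apply_eq_zero_of_mem_pPowerSubalgebra [CharP K p]
    (d : Derivation K (MvPolynomial σ K) (MvPolynomial σ K)) :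
    ∀ P ∈ pPowerSubalgebra K σ p, d P = 0 := by
  refine fun P hP => Derivation.eqOn_adjoin (D1 := d) (D2 := 0) ?_ hP
  rintro _ ⟨i, rfl⟩
  simp [Derivation.leibniz_pow]

theorem span_reducedMonomial_X [Fintype σ] [NeZero p] :
    Submodule.span (pPowerSubalgebra K σ p)
      (Set.range (reducedMonomial X : (σ → Fin p) → MvPolynomial σ K)) = ⊤ := by
  refine eq_top_iff.2 fun P _ => ?_
  induction P using MvPolynomial.induction_on' with
  | add P Q hP hQ => exact add_mem (hP trivial) (hQ trivial)
  | monomial u a =>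
    let r : pPowerSubalgebra K σ p := algebraMap K _ a *
      ∏ i, ⟨X i ^ p, X_pow_mem_pPowerSubalgebra i⟩ ^ (u i / p)
    have hmon : monomial u a = r • reducedMonomial X fun i => Fin.ofNat p (u i) := by
      simp [monomial_eq, reducedMonomial, Subalgebra.smul_def, r, mul_assoc,
        ← Finset.prod_mul_distrib, ← pow_mul, ← pow_add, Nat.div_add_mod, Finsupp.prod_fintype,
        algebraMap_eq]
    rw [hmon]
    exact Submodule.smul_mem _ _ (Submodule.subset_span ⟨_, rfl⟩)

variable (K p)

/-- The partial derivative `∂/∂xᵢ` as a derivation over `K[xᵢ^p]`. -/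
noncomputable def pderivOver [CharP K p] (i : σ) :
    Derivation (pPowerSubalgebra K σ p) (MvPolynomial σ K) (MvPolynomial σ K) :=
  derivationOver _ (pderiv i) (derivation_apply_eq_zero_of_mem_pPowerSubalgebra _)

theorem isDualFamily_pderivOver [CharP K p] :
    IsDualFamily (pderivOver K p : σ → Derivation (pPowerSubalgebra K σ p) _ _) X 1 :=
  ⟨fun _ => pderiv_X_self _, fun hik => pderiv_X_of_ne hik.symm⟩

end PPowers

/-- If every common divisor of all `m×m` jacobian minors of `f₁,…,f_m` is invertible
(`dgcd(f₁,…,f_m) ∼ 1`), then `f₁,…,f_m` form a `p`-basis over `B = K[x₁^p,…,x_n^p]`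
of the ring of constants of some `K`-derivation of `K[x₁,…,x_n]`. -/
theorem pBasis_of_dgcd_isUnit
    {K : Type*} [CommRing K] [IsDomain K] [UniqueFactorizationMonoid K]
    (p : ℕ) (hp : 0 < p) [CharP K p] {n m : ℕ} (hm : 1 ≤ m) (hmn : m ≤ n)
    (f : Fin m → MvPolynomial (Fin n) K)
    (h : ∀ g : MvPolynomial (Fin n) K,
      (∀ j : Fin m → Fin n, g ∣ jacMinor f j) → IsUnit g) :
    ∃ d : Derivation K (MvPolynomial (Fin n) K) (MvPolynomial (Fin n) K),
      IsPBasis (pPowers K n p) {a | d a = 0} p f := by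
  have : Fact p.Prime := ⟨(CharP.char_is_prime_or_zero K p).resolve_right hp.ne'⟩
  have := uniqueFactorizationMonoid_pPowerSubalgebra (K := K) (σ := Fin n) hp
  obtain ⟨d, hd⟩ := pBasis_of_dgcd_isUnit_general pow_mem_pPowerSubalgebra
    (isDualFamily_pderivOver K p) span_reducedMonomial_X h
  exact ⟨d.restrictScalars K, hd⟩
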